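/- Let Ξ, Ω ⊆ ℍ be domains, θ ∈ [0,2π), and let T : Ξ → Ω be a C¹ bijection. Let A : Ξ → ℍ and B : Ω → ℍ be C¹ functions with A(z) ≠ 0 for all z ∈ Ξ and B(ζ) ≠ 0 for all ζ ∈ Ω, and suppose the chain rule ${}^θ𝒟_z[\,A·(f∘T)\,] = (B∘T)·\big(({}^θ𝒟 f)∘T\big)$ holds on Ξ for every f ∈ C¹(Ω,ℍ). Then for all u, v ∈ ℍ and every f ∈ C¹(Ω,ℍ): ${}^θ_u𝒟_z\big[\,e^{⟨v−u,·⟩_θ}\,A·(f∘T)\,\big](z) = e^{⟨v−u,z⟩_θ}\,B(T(z))·\big({}^θ𝒟 f(T(z)) + δ_T(T(z))\,f(T(z))\big)$ for all z ∈ Ξ, where δ_T(ζ) := B(ζ)^{−1}·v·A(T^{−1}(ζ)) for ζ ∈ Ω. -/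

import Mathlib

open MeasureTheory

noncomputable section

/-- The real quaternions `ℍ`. -/
abbrev H4 : Type := Quaternion ℝ

instance : MeasurableSpace H4 := borel _
instance : BorelSpace H4 := ⟨rfl⟩

/-- The quaternion unit `i`. -/
def qI : H4 := ⟨0, 1, 0, 0⟩
/-- The quaternion unit `j`. -/
def qJ : H4 := ⟨0, 0, 1, 0⟩
/-- `e^{iθ} = cos θ + (sin θ) i` as a quaternion. -/
def eIθ (θ : ℝ) : H4 := ⟨Real.cos θ, Real.sin θ, 0, 0⟩
/-- The basis direction `i e^{iθ} j`. -/
def e2 (θ : ℝ) : H4 := qI * eIθ θ * qJ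
/-- The basis direction `e^{iθ} j`. -/
def e3 (θ : ℝ) : H4 := eIθ θ * qJ

/-- Third θ-coordinate of a quaternion `z = x₀ + x₁ i + x₂ (i e^{iθ} j) + x₃ (e^{iθ} j)`. -/
def x2θ (θ : ℝ) (z : H4) : ℝ := -z.imJ * Real.sin θ + z.imK * Real.cos θ
/-- Fourth θ-coordinate of a quaternion. -/
def x3θ (θ : ℝ) (z : H4) : ℝ := z.imJ * Real.cos θ + z.imK * Real.sin θ

/-- The θ-inner product `⟨u,z⟩_θ`: the dot product of θ-coordinates. -/
def innerθ (θ : ℝ) (u z : H4) : ℝ :=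
  u.re * z.re + u.imI * z.imI + x2θ θ u * x2θ θ z + x3θ θ u * x3θ θ z

/-- Left θ-Cauchy–Riemann operator
`{}^θ𝒟 f = ∂f/∂x₀ + i ∂f/∂x₁ + (i e^{iθ} j) ∂f/∂x₂ + (e^{iθ} j) ∂f/∂x₃`. -/
def Dl (θ : ℝ) (f : H4 → H4) (z : H4) : H4 :=
  fderiv ℝ f z 1 + qI * fderiv ℝ f z qI + e2 θ * fderiv ℝ f z (e2 θ) +
    e3 θ * fderiv ℝ f z (e3 θ)

/-- Left (θ,u)-Cauchy–Riemann operator `{}^θ_u𝒟 f = {}^θ𝒟 f + u f`. -/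
def Dlu (θ : ℝ) (u : H4) (f : H4 → H4) (z : H4) : H4 := Dl θ f z + u * f z

/-- Right θ-Cauchy–Riemann operator. -/
def Dr (θ : ℝ) (f : H4 → H4) (z : H4) : H4 :=
  fderiv ℝ f z 1 + fderiv ℝ f z qI * qI + fderiv ℝ f z (e2 θ) * e2 θ +
    fderiv ℝ f z (e3 θ) * e3 θ

/-- Right (θ,u)-Cauchy–Riemann operator `{}^θ𝒟_{r,u} f = {}^θ𝒟_r f + f u`. -/
def Dru (θ : ℝ) (u : H4) (f : H4 → H4) (z : H4) : H4 := Dr θ f z + f z * u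

/-- Embedding of ℂ into the quaternions, `ℂ ≅ ℝ + ℝi ⊂ ℍ`. -/
def toH (a : ℂ) : H4 := ⟨a.re, a.im, 0, 0⟩

/-- First complex θ-component of a quaternion: `z₁ = x₀ + x₁ i`. -/
def c1 (z : H4) : ℂ := ⟨z.re, z.imI⟩
/-- Second complex θ-component of a quaternion: `z₂ = x₂ + x₃ i`. -/
def c2 (θ : ℝ) (z : H4) : ℂ := ⟨x2θ θ z, x3θ θ z⟩

/-- Wirtinger operator `∂/∂z̄₁ = ∂/∂x₀ + i ∂/∂x₁` on ℂ-valued functions. -/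
def db1 (f : H4 → ℂ) (z : H4) : ℂ := fderiv ℝ f z 1 + Complex.I * fderiv ℝ f z qI
/-- Wirtinger operator `∂/∂z̄₂ = ∂/∂x₂ + i ∂/∂x₃` on ℂ-valued functions. -/
def db2 (θ : ℝ) (f : H4 → ℂ) (z : H4) : ℂ :=
  fderiv ℝ f z (e2 θ) + Complex.I * fderiv ℝ f z (e3 θ)
/-- Wirtinger operator `∂/∂z₂ = ∂/∂x₂ − i ∂/∂x₃` on ℂ-valued functions. -/
def dz2 (θ : ℝ) (f : H4 → ℂ) (z : H4) : ℂ :=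
  fderiv ℝ f z (e2 θ) - Complex.I * fderiv ℝ f z (e3 θ)

/-- `e^{iθ}` as a complex number. -/
def cexpI (θ : ℝ) : ℂ := ⟨Real.cos θ, Real.sin θ⟩

/-!
The vectors `1, i, i e^{iθ} j, e^{iθ} j` form an orthonormal basis of `ℍ`, so `⟨·,·⟩_θ` is the
Euclidean inner product for every `θ`, and applying `{}^θ𝒟` to a real-valued function gives its
Euclidean gradient. Since the gradient of `e^{⟨a,·⟩}` is `e^{⟨a,·⟩} a`, the Leibniz rule shows that
multiplication by `e^{⟨v-u,·⟩}` intertwines `{}^θ_u𝒟` with `{}^θ_v𝒟 = {}^θ𝒟 + v`. The chain rule for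
`A (f ∘ T)` then computes the `{}^θ𝒟` part, and `δ_T` is the zeroth-order term `v A (f ∘ T)` with
`B ∘ T` factored out on the left.
-/

open scoped Quaternion RealInnerProductSpace

theorem e2_eq (θ : ℝ) : e2 θ = ⟨0, 0, -Real.sin θ, Real.cos θ⟩ := by
  -- `simp` stalls on products of unfolded tuples, so they are expanded before the units.
  ext <;>
  · simp only [e2, Quaternion.re_mul, Quaternion.imI_mul, Quaternion.imJ_mul, Quaternion.imK_mul]
    simp [qI, qJ, eIθ]

theorem e3_eq (θ : ℝ) : e3 θ = ⟨0, 0, Real.cos θ, Real.sin θ⟩ := by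
  ext <;>
  · simp only [e3, Quaternion.re_mul, Quaternion.imI_mul, Quaternion.imJ_mul, Quaternion.imK_mul]
    simp [qJ, eIθ]

theorem inner_eq_add_components (a b : H4) :
    ⟪a, b⟫ = a.re * b.re + a.imI * b.imI + a.imJ * b.imJ + a.imK * b.imK := by
  simp [Quaternion.inner_def]

theorem innerθ_eq_inner (θ : ℝ) (u z : H4) : innerθ θ u z = ⟪u, z⟫ := by
  simp only [innerθ, x2θ, x3θ, inner_eq_add_components]
  linear_combination (u.imJ * z.imJ + u.imK * z.imK) * Real.sin_sq_add_cos_sq θ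

theorem sum_coord_smul_frame (θ : ℝ) (z : H4) :
    z.re • (1 : H4) + z.imI • qI + x2θ θ z • e2 θ + x3θ θ z • e3 θ = z := by
  ext <;> simp only [Quaternion.re_add, Quaternion.imI_add, Quaternion.imJ_add, Quaternion.imK_add,
    Quaternion.re_smul, Quaternion.imI_smul, Quaternion.imJ_smul, Quaternion.imK_smul,
    Quaternion.re_one, Quaternion.imI_one, Quaternion.imJ_one, Quaternion.imK_one,
    smul_eq_mul] <;> simp only [qI, e2_eq, e3_eq, x2θ, x3θ]
  · ring
  · ring
  · linear_combination z.imJ * Real.sin_sq_add_cos_sq θ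
  · linear_combination z.imK * Real.sin_sq_add_cos_sq θ

theorem sum_inner_smul_frame (θ : ℝ) (a : H4) :
    ⟪a, 1⟫ • (1 : H4) + ⟪a, qI⟫ • qI + ⟪a, e2 θ⟫ • e2 θ + ⟪a, e3 θ⟫ • e3 θ = a := by
  have inner_one : ⟪a, 1⟫ = a.re := by simp [inner_eq_add_components]
  have inner_qI : ⟪a, qI⟫ = a.imI := by rw [inner_eq_add_components]; simp [qI]
  have inner_e2 : ⟪a, e2 θ⟫ = x2θ θ a := by rw [inner_eq_add_components]; simp [e2_eq, x2θ]
  have inner_e3 : ⟪a, e3 θ⟫ = x3θ θ a := by rw [inner_eq_add_components]; simp [e3_eq, x3θ]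
  rw [inner_one, inner_qI, inner_e2, inner_e3, sum_coord_smul_frame]

theorem hasGradientAt_exp_inner {F : Type*} [NormedAddCommGroup F] [InnerProductSpace ℝ F]
    [CompleteSpace F] (a z : F) :
    HasGradientAt (fun w => Real.exp ⟪a, w⟫) (Real.exp ⟪a, z⟫ • a) z := by
  rw [hasGradientAt_iff_hasFDerivAt, map_smul]
  exact (InnerProductSpace.toDual ℝ F a).hasFDerivAt.exp

theorem Dl_smul (θ : ℝ) {φ : H4 → ℝ} {φ' : H4} {g : H4 → H4} {z : H4} (hφ : HasGradientAt φ φ' z)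
    (hg : DifferentiableAt ℝ g z) :
    Dl θ (fun w => φ w • g w) z = φ z • Dl θ g z + φ' * g z := by
  have fderiv_smul_apply (e : H4) :
      fderiv ℝ (fun w => φ w • g w) z e = φ z • fderiv ℝ g z e + ⟪φ', e⟫ • g z :=
    congrArg (· e) (hφ.hasFDerivAt.smul hg.hasFDerivAt).fderiv
  have gradient_mul : φ' * g z = ⟪φ', 1⟫ • g z + qI * ⟪φ', qI⟫ • g z
      + e2 θ * ⟪φ', e2 θ⟫ • g z + e3 θ * ⟪φ', e3 θ⟫ • g z := by
    conv_lhs => rw [← sum_inner_smul_frame θ φ']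
    simp only [add_mul, smul_mul_assoc, one_mul, mul_smul_comm]
  simp only [Dl, fderiv_smul_apply, gradient_mul, mul_add, smul_add, mul_smul_comm]
  abel

theorem Dlu_exp_smul (θ : ℝ) (u v : H4) {g : H4 → H4} {z : H4} (hg : DifferentiableAt ℝ g z) :
    Dlu θ u (fun w => Real.exp (innerθ θ (v - u) w) • g w) z
      = Real.exp (innerθ θ (v - u) z) • Dlu θ v g z := by
  simp only [Dlu, innerθ_eq_inner]
  rw [Dl_smul θ (hasGradientAt_exp_inner (v - u) z) hg, smul_mul_assoc, mul_smul_comm, add_assoc,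
    ← smul_add, ← add_mul, sub_add_cancel, ← smul_add]

theorem statement4_general (θ : ℝ) {T S A B f : H4 → H4} {z : H4}
    (hT : DifferentiableAt ℝ T z) (hA : DifferentiableAt ℝ A z)
    (hf : DifferentiableAt ℝ f (T z)) (hS : S (T z) = z) (hB : B (T z) ≠ 0)
    (hchain : Dl θ (fun w => A w * f (T w)) z = B (T z) * Dl θ f (T z)) (u v : H4) :
    Dlu θ u (fun w => Real.exp (innerθ θ (v - u) w) • (A w * f (T w))) z
      = Real.exp (innerθ θ (v - u) z) •
          (B (T z) * (Dl θ f (T z) + ((B (T z))⁻¹ * v * A (S (T z))) * f (T z))) := by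
  have hg : DifferentiableAt ℝ (fun w => A w * f (T w)) z := hA.fun_mul (hf.comp z hT)
  rw [Dlu_exp_smul θ u v hg, Dlu, hchain, hS, mul_add]
  simp only [mul_assoc, mul_inv_cancel_left₀ hB]

/-- conformal covariance of `{}^θ_u𝒟`:
`{}^θ_u𝒟[e^{⟨v−u,·⟩_θ} A (f∘T)](z) = e^{⟨v−u,z⟩_θ} B(T z) ({}^θ𝒟 f(Tz) + δ_T(Tz) f(Tz))`
with `δ_T(ζ) = B(ζ)⁻¹ v A(T⁻¹ ζ)`. -/
theorem statement4 (Ξ Ω : Set H4) (hΞo : IsOpen Ξ) (hΞc : IsConnected Ξ)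
    (hΩo : IsOpen Ω) (hΩc : IsConnected Ω) (θ : ℝ) (hθ : θ ∈ Set.Ico 0 (2 * Real.pi))
    (T : H4 → H4) (hT : ContDiffOn ℝ 1 T Ξ) (hTbij : Set.BijOn T Ξ Ω)
    (S : H4 → H4) (hS : ∀ z ∈ Ξ, S (T z) = z) (hS' : ∀ ζ ∈ Ω, T (S ζ) = ζ)
    (A B : H4 → H4) (hA : ContDiffOn ℝ 1 A Ξ) (hB : ContDiffOn ℝ 1 B Ω)
    (hA0 : ∀ z ∈ Ξ, A z ≠ 0) (hB0 : ∀ ζ ∈ Ω, B ζ ≠ 0)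
    (hchain : ∀ f : H4 → H4, ContDiffOn ℝ 1 f Ω →
      ∀ z ∈ Ξ, Dl θ (fun w => A w * f (T w)) z = B (T z) * Dl θ f (T z))
    (u v : H4) (f : H4 → H4) (hf : ContDiffOn ℝ 1 f Ω) :
    ∀ z ∈ Ξ,
      Dlu θ u (fun w => Real.exp (innerθ θ (v - u) w) • (A w * f (T w))) z
        = Real.exp (innerθ θ (v - u) z) •
            (B (T z) * (Dl θ f (T z) + ((B (T z))⁻¹ * v * A (S (T z))) * f (T z))) := fun z hz =>
  have hΞz := hΞo.mem_nhds hz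
  have hTz := hTbij.mapsTo hz
  statement4_general θ ((hT.contDiffAt hΞz).differentiableAt one_ne_zero)
    ((hA.contDiffAt hΞz).differentiableAt one_ne_zero)
    ((hf.contDiffAt (hΩo.mem_nhds hTz)).differentiableAt one_ne_zero)
    (hS z hz) (hB0 _ hTz) (hchain f hf z hz) u v

end
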